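/- Let C_1 = x_0 x_1 ⋯ x_{2n-1} x_0 and C_2 = y_0 y_1 ⋯ y_{2m-1} y_0 be two vertex-disjoint alternating cycles and let G ∈ C_1 ⊕ C_2 have no good pair. Let P_{uv} be a parallel class. Then each vertex w ∈ V(C_1) is incident with exactly lcm(n,m)/n edges of P_{uv}, each vertex w ∈ V(C_2) is incident with exactly lcm(n,m)/m edges of P_{uv}, and for each fixed vertex w all the edges of P_{uv} incident with w have the same color. Moreover, for vertices w, x ∈ V(C_i) (i ∈ {1,2}), the edges of P_{uv} incident with w have the same color as the edges of P_{uv} incident with x if and only if w ≡ x (mod 2). -/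

import Mathlib

/-- An alternating cycle of length `N` in the 2-edge-colored graph `(G, c)`
(colors: `true` = red, `false` = blue). -/
def IsAltCycle {V : Type*} (G : SimpleGraph V) (c : Sym2 V → Bool) {N : ℕ}
    (x : ZMod N → V) : Prop :=
  Function.Injective x ∧ (∀ i, G.Adj (x i) (x (i + 1))) ∧
    ∀ i, c s(x i, x (i + 1)) ≠ c s(x (i + 1), x (i + 2))

/-- There is a good pair of edges between the two vertex-disjoint alternating
cycles `x` and `y`. -/
def HasGoodPair {V : Type*} (G : SimpleGraph V) (c : Sym2 V → Bool) {N M : ℕ}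
    (x : ZMod N → V) (y : ZMod M → V) : Prop :=
  ∃ (s s' : ZMod N) (t t' : ZMod M),
    (s' = s - 1 ∨ s' = s + 1) ∧ (t' = t - 1 ∨ t' = t + 1) ∧
    G.Adj (x s) (y t) ∧ G.Adj (x s') (y t') ∧
    c s(x s, x s') = c s(x s, y t) ∧
    c s(x s', y t') = c s(x s, y t) ∧
    c s(y t', y t) = c s(x s, y t)

/-- `G` is a colored generalized sum of the two vertex-disjoint alternating cycles
`C₁ = x` (of length `2n`) and `C₂ = y` (of length `2m`), regarded as 2-edge-colored
graphs: the `x`- and `y`-vertices cover `V(G)` and have disjoint ranges, the edges of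
`G` inside each part are exactly the corresponding cycle edges, both cycles are
alternating, and between any two vertices of different parts there is exactly one
(arbitrarily colored) edge. -/
def IsCGSTwoCycles {V : Type*} (G : SimpleGraph V) (c : Sym2 V → Bool) {n m : ℕ}
    (x : ZMod (2 * n) → V) (y : ZMod (2 * m) → V) : Prop :=
  IsAltCycle G c x ∧ IsAltCycle G c y ∧
  Disjoint (Set.range x) (Set.range y) ∧
  (∀ v : V, v ∈ Set.range x ∪ Set.range y) ∧
  (∀ i j : ZMod (2 * n), G.Adj (x i) (x j) ↔ (j = i + 1 ∨ j = i - 1)) ∧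
  (∀ i j : ZMod (2 * m), G.Adj (y i) (y j) ↔ (j = i + 1 ∨ j = i - 1)) ∧
  (∀ (i : ZMod (2 * n)) (j : ZMod (2 * m)), G.Adj (x i) (y j))

/-- The set of exterior edges of a colored generalized sum of the two cycles
`x` and `y`: the edges joining the two parts. -/
def extEdges {V : Type*} {N M : ℕ} (x : ZMod N → V) (y : ZMod M → V) : Set (Sym2 V) :=
  {e | ∃ i j, e = s(x i, y j)}

/-- One step of the construction of a parallel class: from the exterior edge
`x a - y b`, move to the neighbor of `x a` on `C₁` and the neighbor of `y b` on `C₂`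
joined to them by the cycle-edge whose color equals `c s(x a, y b)`. -/
def pstep {V : Type*} (c : Sym2 V → Bool) {N M : ℕ} (x : ZMod N → V) (y : ZMod M → V) :
    ZMod N × ZMod M → ZMod N × ZMod M :=
  fun p =>
    (if c s(x p.1, x (p.1 + 1)) = c s(x p.1, y p.2) then p.1 + 1 else p.1 - 1,
     if c s(y p.2, y (p.2 + 1)) = c s(x p.1, y p.2) then p.2 + 1 else p.2 - 1)

/-- The parallel class `P_{uv}` of the exterior edge `u v = x a - y b`:
the set of exterior edges obtained from it by iterating `pstep`,
`lcm (2n) (2m)` times. -/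
def parallelClass {V : Type*} (c : Sym2 V → Bool) {N M : ℕ}
    (x : ZMod N → V) (y : ZMod M → V) (a : ZMod N) (b : ZMod M) : Set (Sym2 V) :=
  {e | ∃ i < Nat.lcm N M,
    e = s(x ((pstep c x y)^[i] (a, b)).1, y ((pstep c x y)^[i] (a, b)).2)}

/-- The number of red exterior edges incident with `v`. -/
noncomputable def dred {V : Type*} (c : Sym2 V → Bool) {N M : ℕ}
    (x : ZMod N → V) (y : ZMod M → V) (v : V) : ℕ :=
  {e : Sym2 V | e ∈ extEdges x y ∧ v ∈ e ∧ c e = true}.ncard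

/-- The number of blue exterior edges incident with `v`. -/
noncomputable def dblue {V : Type*} (c : Sym2 V → Bool) {N M : ℕ}
    (x : ZMod N → V) (y : ZMod M → V) (v : V) : ℕ :=
  {e : Sym2 V | e ∈ extEdges x y ∧ v ∈ e ∧ c e = false}.ncard

/-!
Follow the parallel class from `x a - y b`. Since the cycles alternate and there is no good pair,
each step of the construction flips the color of the exterior edge, and it flips the color of the
next cycle-edge in the current direction as well. So the walk never turns around: its `i`-th edge
joins `x (a ± i)` to `y (b ± i)`, with fixed signs. These edges are distinct for `i < lcm N M`,
the vertex `x w` is met once in every `N` steps, and both the color of the `i`-th edge and the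
parity of `a ± i` are governed by the parity of `i`. The other cycle follows by symmetry.
-/

section Residues

variable {N : ℕ}

lemma ncard_natCast_zmod_eq [NeZero N] {L : ℕ} (h : N ∣ L) (r : ZMod N) :
    {i : ℕ | i < L ∧ (i : ZMod N) = r}.ncard = L / N := by
  have hset : {i : ℕ | i < L ∧ (i : ZMod N) = r} =
      ({i ∈ Finset.range L | i ≡ r.val [MOD N]} : Finset ℕ) := by
    ext i
    simp [← ZMod.natCast_eq_natCast_iff]
  rw [hset, Set.ncard_coe_finset, ← Nat.count_eq_card_filter_range,
    Nat.count_modEq_card _ (NeZero.pos N), Nat.mod_eq_zero_of_dvd h]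
  simp

lemma zmod_val_add_mul_unit_mod_two_eq_iff [NeZero N] (hN : 2 ∣ N) (a : ZMod N) (ε : (ZMod N)ˣ)
    (i j : ℕ) : (a + i * ε).val % 2 = (a + j * ε).val % 2 ↔ i % 2 = j % 2 := by
  let reduction := ZMod.castHom hN (ZMod 2)
  have reduction_eq_val (w : ZMod N) : reduction w = (w.val : ZMod 2) := by
    rw [← map_natCast reduction, ZMod.natCast_zmod_val]
  have reduction_unit : reduction ε = 1 :=
    congrArg Units.val (Subsingleton.elim (Units.map reduction.toMonoidHom ε) 1)
  simp only [← ZMod.natCast_eq_natCast_iff', ← reduction_eq_val, map_add, map_mul, map_natCast,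
    reduction_unit, mul_one, add_right_inj]

end Residues

lemma eq_iff_mod_two_eq_of_succ_eq_not {f : ℕ → Bool} (hf : ∀ i, f (i + 1) = !f i) (i j : ℕ) :
    f i = f j ↔ i % 2 = j % 2 := by
  have eq_xor_bodd (i : ℕ) : f i = (f 0 ^^ i.bodd) := by
    induction i with
    | zero => simp
    | succ i ih => simp [hf, ih]
  rw [eq_xor_bodd i, eq_xor_bodd j, Bool.xor_right_inj, Nat.mod_two_of_bodd, Nat.mod_two_of_bodd]
  cases i.bodd <;> cases j.bodd <;> decide

section ParallelClass

variable {V : Type*} {G : SimpleGraph V} {c : Sym2 V → Bool} {N M : ℕ}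
  {x : ZMod N → V} {y : ZMod M → V}

/-- The neighbor of `x p` along the edge of color `k` of the alternating cycle `x`, so that `pstep`
is a pair of moves of this kind. -/
def altNext (c : Sym2 V → Bool) (x : ZMod N → V) (k : Bool) (p : ZMod N) : ZMod N :=
  if c s(x p, x (p + 1)) = k then p + 1 else p - 1

namespace IsAltCycle

lemma color_succ (hx : IsAltCycle G c x) (p : ZMod N) :
    c s(x (p + 1), x (p + 1 + 1)) = !c s(x p, x (p + 1)) := by
  rw [add_assoc, one_add_one_eq_two]
  exact Bool.eq_not.2 (hx.2.2 p).symm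

lemma color_pred (hx : IsAltCycle G c x) (p : ZMod N) :
    c s(x p, x (p - 1)) = !c s(x p, x (p + 1)) := by
  have h := hx.color_succ (p - 1)
  rw [sub_add_cancel] at h
  rw [h, Bool.not_not, Sym2.eq_swap]

lemma color_add_unit (hx : IsAltCycle G c x) {ε : (ZMod N)ˣ} (hε : ε = 1 ∨ ε = -1) (p : ZMod N) :
    c s(x (p + ε), x (p + ε + ε)) = !c s(x p, x (p + ε)) := by
  rcases hε with rfl | rfl
  · exact hx.color_succ p
  · simp only [Units.val_neg, Units.val_one, ← sub_eq_add_neg]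
    rw [hx.color_pred, sub_add_cancel, Sym2.eq_swap]

lemma exists_color_eq (hx : IsAltCycle G c x) (p : ZMod N) (k : Bool) :
    ∃ ε : (ZMod N)ˣ, (ε = 1 ∨ ε = -1) ∧ c s(x p, x (p + ε)) = k := by
  by_cases hk : c s(x p, x (p + 1)) = k
  · exact ⟨1, .inl rfl, hk⟩
  · refine ⟨-1, .inr rfl, ?_⟩
    rw [Units.val_neg, Units.val_one, ← sub_eq_add_neg, hx.color_pred, Bool.not_eq_eq_eq_not]
    exact Bool.eq_not.2 hk

lemma altNext_eq (hx : IsAltCycle G c x) {ε : (ZMod N)ˣ} (hε : ε = 1 ∨ ε = -1) {p : ZMod N}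
    {k : Bool} (hk : c s(x p, x (p + ε)) = k) : altNext c x k p = p + ε := by
  subst hk
  rcases hε with rfl | rfl
  · exact if_pos rfl
  · rw [altNext, Units.val_neg, Units.val_one, ← sub_eq_add_neg, hx.color_pred]
    exact if_neg (by simp)

end IsAltCycle

lemma pstep_eq_altNext (p : ZMod N) (q : ZMod M) :
    pstep c x y (p, q) = (altNext c x (c s(x p, y q)) p, altNext c y (c s(x p, y q)) q) :=
  rfl

lemma pstep_swap (p : ZMod N × ZMod M) : pstep c y x p.swap = (pstep c x y p).swap := by
  obtain ⟨p, q⟩ := p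
  simp only [Prod.swap_prod_mk, pstep_eq_altNext, Sym2.eq_swap (a := y q)]

lemma parallelClass_swap (a : ZMod N) (b : ZMod M) :
    parallelClass c y x b a = parallelClass c x y a b := by
  have iterate_swap (i : ℕ) : (pstep c y x)^[i] (b, a) = ((pstep c x y)^[i] (a, b)).swap :=
    ((Function.Semiconj.iterate_right (f := Prod.swap) (fun p ↦ (pstep_swap p).symm) i) (a, b)).symm
  simp only [parallelClass, iterate_swap, Prod.fst_swap, Prod.snd_swap, Nat.lcm_comm M N,
    Sym2.eq_swap (a := y _)]

lemma HasGoodPair.swap (h : HasGoodPair G c x y) : HasGoodPair G c y x := by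
  obtain ⟨s, s', t, t', hs, ht, hadj, hadj', hx, hxy, hy⟩ := h
  refine ⟨t, t', s, s', ht, hs, hadj.symm, hadj'.symm, ?_, ?_, ?_⟩ <;>
    rwa [Sym2.eq_swap, Sym2.eq_swap (a := y t)]

/-- Two vertex-disjoint alternating cycles `x` and `y` of `G` with every vertex of `x` adjacent to
every vertex of `y`. Unlike in a colored generalized sum, the cycles may have chords and need not
cover `V(G)`. -/
structure IsAltCycleJoin (G : SimpleGraph V) (c : Sym2 V → Bool) (x : ZMod N → V)
    (y : ZMod M → V) : Prop where
  left : IsAltCycle G c x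
  right : IsAltCycle G c y
  disjoint : Disjoint (Set.range x) (Set.range y)
  adj (p : ZMod N) (q : ZMod M) : G.Adj (x p) (y q)

lemma IsCGSTwoCycles.isAltCycleJoin {n m : ℕ} {x : ZMod (2 * n) → V} {y : ZMod (2 * m) → V}
    (h : IsCGSTwoCycles G c x y) : IsAltCycleJoin G c x y :=
  let ⟨hx, hy, hxy, _, _, _, hadj⟩ := h
  ⟨hx, hy, hxy, hadj⟩

lemma IsAltCycleJoin.swap (h : IsAltCycleJoin G c x y) : IsAltCycleJoin G c y x :=
  ⟨h.right, h.left, h.disjoint.symm, fun q p ↦ (h.adj p q).symm⟩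

/-- The signs `ε` and `δ` in which `pstep` moves along the two cycles from the exterior edge
`x p - y q`: the cycle-edges in these directions have the color of that edge. Signs are encoded as
units so that they can be cancelled. -/
structure IsParallelDirection (c : Sym2 V → Bool) (x : ZMod N → V) (y : ZMod M → V)
    (ε : (ZMod N)ˣ) (δ : (ZMod M)ˣ) (p : ZMod N) (q : ZMod M) : Prop where
  sign_left : ε = 1 ∨ ε = -1
  sign_right : δ = 1 ∨ δ = -1
  color_left : c s(x p, x (p + ε)) = c s(x p, y q)
  color_right : c s(y q, y (q + δ)) = c s(x p, y q)

/-- The `i`-th edge met when moving from `x a - y b` by steps of `ε` along `x` and of `δ`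
along `y`. -/
def parallelEdge (x : ZMod N → V) (y : ZMod M → V) (ε : (ZMod N)ˣ) (δ : (ZMod M)ˣ)
    (a : ZMod N) (b : ZMod M) (i : ℕ) : Sym2 V :=
  s(x (a + i * ε), y (b + i * δ))

section ParallelEdge

variable {ε : (ZMod N)ˣ} {δ : (ZMod M)ˣ} {a : ZMod N} {b : ZMod M}

lemma parallelEdge_swap (i : ℕ) : parallelEdge y x δ ε b a i = parallelEdge x y ε δ a b i :=
  Sym2.eq_swap

lemma mem_parallelEdge_left (hx : Function.Injective x)
    (hxy : Disjoint (Set.range x) (Set.range y)) {w : ZMod N} {i : ℕ} :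
    x w ∈ parallelEdge x y ε δ a b i ↔ a + i * ε = w := by
  have ne (q : ZMod M) : x w ≠ y q := hxy.ne_of_mem ⟨w, rfl⟩ ⟨q, rfl⟩
  simp only [parallelEdge, Sym2.mem_iff, ne, or_false, hx.eq_iff, eq_comm]

lemma modEq_of_parallelEdge_eq (hx : Function.Injective x)
    (hxy : Disjoint (Set.range x) (Set.range y)) {i j : ℕ}
    (h : parallelEdge x y ε δ a b i = parallelEdge x y ε δ a b j) : i ≡ j [MOD N] := by
  have hmem : x (a + i * ε) ∈ parallelEdge x y ε δ a b j := h ▸ Sym2.mem_mk_left _ _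
  have heq : a + j * ε = a + i * ε := (mem_parallelEdge_left hx hxy).1 hmem
  rwa [add_right_inj, Units.mul_left_inj, eq_comm, ZMod.natCast_eq_natCast_iff] at heq

lemma injOn_parallelEdge (hx : Function.Injective x) (hy : Function.Injective y)
    (hxy : Disjoint (Set.range x) (Set.range y)) :
    Set.InjOn (parallelEdge x y ε δ a b) (Set.Iio (N.lcm M)) := by
  intro i hi j hj h
  have modEq_left : i ≡ j [MOD N] := modEq_of_parallelEdge_eq hx hxy h
  have modEq_right : i ≡ j [MOD M] := by
    rw [← parallelEdge_swap i, ← parallelEdge_swap j] at h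
    exact modEq_of_parallelEdge_eq hy hxy.symm h
  exact (Nat.mod_lcm modEq_left modEq_right).eq_of_lt_of_lt hi hj

lemma ncard_image_parallelEdge_incident [NeZero N] (hx : Function.Injective x)
    (hy : Function.Injective y) (hxy : Disjoint (Set.range x) (Set.range y)) (w : ZMod N) :
    {e ∈ parallelEdge x y ε δ a b '' Set.Iio (N.lcm M) | x w ∈ e}.ncard = N.lcm M / N := by
  have mem_iff (i : ℕ) : x w ∈ parallelEdge x y ε δ a b i ↔ (i : ZMod N) = (w - a) * ↑ε⁻¹ := by
    rw [mem_parallelEdge_left hx hxy, Units.eq_mul_inv_iff_mul_eq, eq_sub_iff_add_eq']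
  have hset : {e ∈ parallelEdge x y ε δ a b '' Set.Iio (N.lcm M) | x w ∈ e} =
      parallelEdge x y ε δ a b '' {i | i < N.lcm M ∧ (i : ZMod N) = (w - a) * ↑ε⁻¹} := by
    ext e
    constructor
    · rintro ⟨⟨i, hi, rfl⟩, hw⟩
      exact ⟨i, ⟨hi, (mem_iff i).1 hw⟩, rfl⟩
    · rintro ⟨i, ⟨hi, hw⟩, rfl⟩
      exact ⟨⟨i, hi, rfl⟩, (mem_iff i).2 hw⟩
  rw [hset, ((injOn_parallelEdge hx hy hxy).mono fun i hi ↦ hi.1).ncard_image,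
    ncard_natCast_zmod_eq (Nat.dvd_lcm_left N M)]

end ParallelEdge

namespace IsAltCycleJoin

variable {ε : (ZMod N)ˣ} {δ : (ZMod M)ˣ} {a p : ZMod N} {b q : ZMod M}

lemma exists_isParallelDirection (h : IsAltCycleJoin G c x y) (p : ZMod N) (q : ZMod M) :
    ∃ ε δ, IsParallelDirection c x y ε δ p q :=
  let ⟨ε, hε, hεc⟩ := h.left.exists_color_eq p (c s(x p, y q))
  let ⟨δ, hδ, hδc⟩ := h.right.exists_color_eq q (c s(x p, y q))
  ⟨ε, δ, hε, hδ, hεc, hδc⟩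

lemma pstep_eq (h : IsAltCycleJoin G c x y) (hd : IsParallelDirection c x y ε δ p q) :
    pstep c x y (p, q) = (p + ε, q + δ) := by
  rw [pstep_eq_altNext, h.left.altNext_eq hd.sign_left hd.color_left,
    h.right.altNext_eq hd.sign_right hd.color_right]

lemma color_add_eq_not (h : IsAltCycleJoin G c x y) (hgp : ¬ HasGoodPair G c x y)
    (hd : IsParallelDirection c x y ε δ p q) :
    c s(x (p + ε), y (q + δ)) = !c s(x p, y q) := by
  have neighbor {K : ℕ} {σ : (ZMod K)ˣ} (hσ : σ = 1 ∨ σ = -1) (r : ZMod K) :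
      r + σ = r - 1 ∨ r + σ = r + 1 := by
    rcases hσ with rfl | rfl <;> simp [sub_eq_add_neg]
  refine Bool.eq_not.2 fun hc ↦ hgp ⟨p, p + ε, q, q + δ, neighbor hd.sign_left p,
    neighbor hd.sign_right q, h.adj _ _, h.adj _ _, hd.color_left, hc, ?_⟩
  rw [Sym2.eq_swap, hd.color_right]

lemma isParallelDirection_add (h : IsAltCycleJoin G c x y) (hgp : ¬ HasGoodPair G c x y)
    (hd : IsParallelDirection c x y ε δ p q) :
    IsParallelDirection c x y ε δ (p + ε) (q + δ) where
  sign_left := hd.sign_left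
  sign_right := hd.sign_right
  color_left := by
    rw [h.left.color_add_unit hd.sign_left, hd.color_left, h.color_add_eq_not hgp hd]
  color_right := by
    rw [h.right.color_add_unit hd.sign_right, hd.color_right, h.color_add_eq_not hgp hd]

lemma isParallelDirection_add_mul (h : IsAltCycleJoin G c x y) (hgp : ¬ HasGoodPair G c x y)
    (hd : IsParallelDirection c x y ε δ a b) (i : ℕ) :
    IsParallelDirection c x y ε δ (a + i * ε) (b + i * δ) := by
  induction i with
  | zero => simpa using hd
  | succ i ih => simpa [add_mul, add_assoc] using h.isParallelDirection_add hgp ih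

lemma pstep_iterate (h : IsAltCycleJoin G c x y) (hgp : ¬ HasGoodPair G c x y)
    (hd : IsParallelDirection c x y ε δ a b) (i : ℕ) :
    (pstep c x y)^[i] (a, b) = (a + i * ε, b + i * δ) := by
  induction i with
  | zero => simp
  | succ i ih =>
    rw [Function.iterate_succ_apply', ih, h.pstep_eq (h.isParallelDirection_add_mul hgp hd i)]
    simp [add_mul, add_assoc]

lemma parallelClass_eq_image (h : IsAltCycleJoin G c x y) (hgp : ¬ HasGoodPair G c x y)
    (hd : IsParallelDirection c x y ε δ a b) :
    parallelClass c x y a b = parallelEdge x y ε δ a b '' Set.Iio (N.lcm M) := by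
  ext e
  simp only [parallelClass, h.pstep_iterate hgp hd, parallelEdge, Set.mem_image, Set.mem_Iio,
    Set.mem_ofPred_eq, eq_comm]

lemma color_parallelEdge_eq_iff (h : IsAltCycleJoin G c x y) (hgp : ¬ HasGoodPair G c x y)
    (hd : IsParallelDirection c x y ε δ a b) (i j : ℕ) :
    c (parallelEdge x y ε δ a b i) = c (parallelEdge x y ε δ a b j) ↔ i % 2 = j % 2 := by
  refine eq_iff_mod_two_eq_of_succ_eq_not (f := c ∘ parallelEdge x y ε δ a b) (fun i ↦ ?_) i j
  simpa [parallelEdge, add_mul, add_assoc] using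
    h.color_add_eq_not hgp (h.isParallelDirection_add_mul hgp hd i)

theorem ncard_parallelClass_incident [NeZero N] (h : IsAltCycleJoin G c x y)
    (hgp : ¬ HasGoodPair G c x y) (a : ZMod N) (b : ZMod M) (w : ZMod N) :
    {e ∈ parallelClass c x y a b | x w ∈ e}.ncard = N.lcm M / N := by
  obtain ⟨ε, δ, hd⟩ := h.exists_isParallelDirection a b
  rw [h.parallelClass_eq_image hgp hd]
  exact ncard_image_parallelEdge_incident h.left.1 h.right.1 h.disjoint w

lemma exists_mem_parallelClass_incident [NeZero N] [NeZero M] (h : IsAltCycleJoin G c x y)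
    (hgp : ¬ HasGoodPair G c x y) (a : ZMod N) (b : ZMod M) (w : ZMod N) :
    ∃ e ∈ parallelClass c x y a b, x w ∈ e := by
  have lcm_pos : 0 < N.lcm M := Nat.lcm_pos (NeZero.pos N) (NeZero.pos M)
  have ncard_pos : 0 < {e ∈ parallelClass c x y a b | x w ∈ e}.ncard := by
    rw [h.ncard_parallelClass_incident hgp]
    exact Nat.div_pos (Nat.le_of_dvd lcm_pos (Nat.dvd_lcm_left N M)) (NeZero.pos N)
  exact Set.nonempty_of_ncard_ne_zero ncard_pos.ne'

theorem color_eq_iff_of_mem_parallelClass [NeZero N] (hN : 2 ∣ N) (h : IsAltCycleJoin G c x y)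
    (hgp : ¬ HasGoodPair G c x y) {w z : ZMod N} {e e' : Sym2 V}
    (he : e ∈ parallelClass c x y a b) (hw : x w ∈ e)
    (he' : e' ∈ parallelClass c x y a b) (hz : x z ∈ e') :
    c e = c e' ↔ w.val % 2 = z.val % 2 := by
  obtain ⟨ε, δ, hd⟩ := h.exists_isParallelDirection a b
  rw [h.parallelClass_eq_image hgp hd] at he he'
  obtain ⟨i, -, rfl⟩ := he
  obtain ⟨j, -, rfl⟩ := he'
  obtain rfl := (mem_parallelEdge_left h.left.1 h.disjoint).1 hw
  obtain rfl := (mem_parallelEdge_left h.left.1 h.disjoint).1 hz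
  rw [h.color_parallelEdge_eq_iff hgp hd, zmod_val_add_mul_unit_mod_two_eq_iff hN]

theorem forall_color_eq_iff [NeZero N] [NeZero M] (hN : 2 ∣ N) (h : IsAltCycleJoin G c x y)
    (hgp : ¬ HasGoodPair G c x y) (a : ZMod N) (b : ZMod M) (w z : ZMod N) :
    (∀ e ∈ parallelClass c x y a b, x w ∈ e →
      ∀ e' ∈ parallelClass c x y a b, x z ∈ e' → c e = c e') ↔ w.val % 2 = z.val % 2 := by
  constructor
  · intro hcolor
    obtain ⟨e, he, hw⟩ := h.exists_mem_parallelClass_incident hgp a b w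
    obtain ⟨e', he', hz⟩ := h.exists_mem_parallelClass_incident hgp a b z
    exact (h.color_eq_iff_of_mem_parallelClass hN hgp he hw he' hz).1 (hcolor e he hw e' he' hz)
  · intro hwz e he hw e' he' hz
    exact (h.color_eq_iff_of_mem_parallelClass hN hgp he hw he' hz).2 hwz

end IsAltCycleJoin

theorem parallel_class_at_vertices_general {n m : ℕ} (hn : 0 < n) (hm : 0 < m)
    {x : ZMod (2 * n) → V} {y : ZMod (2 * m) → V} (h : IsAltCycleJoin G c x y)
    (hgp : ¬ HasGoodPair G c x y) (a : ZMod (2 * n)) (b : ZMod (2 * m)) :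
    (∀ w : ZMod (2 * n),
      {e ∈ parallelClass c x y a b | x w ∈ e}.ncard = Nat.lcm n m / n) ∧
    (∀ w : ZMod (2 * m),
      {e ∈ parallelClass c x y a b | y w ∈ e}.ncard = Nat.lcm n m / m) ∧
    (∀ w : ZMod (2 * n), ∀ e ∈ parallelClass c x y a b, x w ∈ e →
      ∀ e' ∈ parallelClass c x y a b, x w ∈ e' → c e = c e') ∧
    (∀ w : ZMod (2 * m), ∀ e ∈ parallelClass c x y a b, y w ∈ e →
      ∀ e' ∈ parallelClass c x y a b, y w ∈ e' → c e = c e') ∧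
    (∀ w z : ZMod (2 * n),
      ((∀ e ∈ parallelClass c x y a b, x w ∈ e →
        ∀ e' ∈ parallelClass c x y a b, x z ∈ e' → c e = c e') ↔
        w.val % 2 = z.val % 2)) ∧
    (∀ w z : ZMod (2 * m),
      ((∀ e ∈ parallelClass c x y a b, y w ∈ e →
        ∀ e' ∈ parallelClass c x y a b, y z ∈ e' → c e = c e') ↔
        w.val % 2 = z.val % 2)) := by
  have : NeZero n := ⟨hn.ne'⟩
  have : NeZero m := ⟨hm.ne'⟩
  have hgp' : ¬ HasGoodPair G c y x := fun hyx ↦ hgp hyx.swap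
  have lcm_div (k l : ℕ) : (2 * k).lcm (2 * l) / (2 * k) = k.lcm l / k := by
    rw [Nat.lcm_mul_left, Nat.mul_div_mul_left _ _ two_pos]
  have color_left := h.forall_color_eq_iff (dvd_mul_right 2 n) hgp a b
  have color_right := h.swap.forall_color_eq_iff (dvd_mul_right 2 m) hgp' b a
  rw [parallelClass_swap] at color_right
  refine ⟨fun w ↦ ?_, fun w ↦ ?_, fun w ↦ (color_left w w).2 rfl, fun w ↦ (color_right w w).2 rfl,
    color_left, color_right⟩
  · rw [h.ncard_parallelClass_incident hgp, lcm_div]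
  · rw [← parallelClass_swap, h.swap.ncard_parallelClass_incident hgp', lcm_div, Nat.lcm_comm]

end ParallelClass

/-- Let `G ∈ C₁ ⊕ C₂` (two vertex-disjoint alternating cycles of lengths
`2n`, `2m`) have no good pair and let `P = P_{uv}` be the parallel class of the exterior
edge `x a - y b`. Then every vertex `x w` of `C₁` is incident with exactly
`lcm n m / n` edges of `P`, every vertex `y w` of `C₂` is incident with exactly
`lcm n m / m` edges of `P`, all edges of `P` incident with a fixed vertex are colored
alike, and for two vertices `w, z` on the same cycle, the edges of `P` at `w` are colored
alike as those at `z` iff `w ≡ z (mod 2)`. -/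
theorem parallel_class_at_vertices {V : Type*} (G : SimpleGraph V) (c : Sym2 V → Bool)
    {n m : ℕ} (hn : 0 < n) (hm : 0 < m)
    (x : ZMod (2 * n) → V) (y : ZMod (2 * m) → V)
    (hG : IsCGSTwoCycles G c x y) (hgp : ¬ HasGoodPair G c x y)
    (a : ZMod (2 * n)) (b : ZMod (2 * m)) :
    (∀ w : ZMod (2 * n),
      {e ∈ parallelClass c x y a b | x w ∈ e}.ncard = Nat.lcm n m / n) ∧
    (∀ w : ZMod (2 * m),
      {e ∈ parallelClass c x y a b | y w ∈ e}.ncard = Nat.lcm n m / m) ∧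
    (∀ w : ZMod (2 * n), ∀ e ∈ parallelClass c x y a b, x w ∈ e →
      ∀ e' ∈ parallelClass c x y a b, x w ∈ e' → c e = c e') ∧
    (∀ w : ZMod (2 * m), ∀ e ∈ parallelClass c x y a b, y w ∈ e →
      ∀ e' ∈ parallelClass c x y a b, y w ∈ e' → c e = c e') ∧
    (∀ w z : ZMod (2 * n),
      ((∀ e ∈ parallelClass c x y a b, x w ∈ e →
        ∀ e' ∈ parallelClass c x y a b, x z ∈ e' → c e = c e') ↔
        w.val % 2 = z.val % 2)) ∧
    (∀ w z : ZMod (2 * m),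
      ((∀ e ∈ parallelClass c x y a b, y w ∈ e →
        ∀ e' ∈ parallelClass c x y a b, y z ∈ e' → c e = c e') ↔
        w.val % 2 = z.val % 2)) :=
  parallel_class_at_vertices_general hn hm hG.isAltCycleJoin hgp a b
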